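/- Let S_0 ∈ (0,∞) and let S_1 be an integrable random variable whose law Q := Law(S_1) has no atoms and has support equal to ℝ_+. Let u = u_λ be the Tail V@R utility of order λ ∈ (0,1], assume u(S_1) < S_0 < −u(−S_1), and let F = f(S_1) where f : ℝ_+ → ℝ is convex of linear growth. Choose a, b, c, d with a + b = λ, d − c = λ, λ^{-1}(∫_0^{q_a} x Q(dx) + ∫_{q_{1−b}}^∞ x Q(dx)) = S_0 and λ^{-1}∫_{q_c}^{q_d} x Q(dx) = S_0, where q_x denotes the x-quantile of Q. Then, in the static model with attainable set A = {h(S_1 − S_0) : h ∈ ℝ}: V̄(F) = λ^{-1}(∫_0^{q_a} f(x) Q(dx) + ∫_{q_{1−b}}^∞ f(x) Q(dx)), V̲(F) = λ^{-1}∫_{q_c}^{q_d} f(x) Q(dx), the superhedging strategy is H̄(F) = (f(q_{1−b}) − f(q_a))/(q_{1−b} − q_a), and the subhedging strategy is H̲(F) = −(f(q_d) − f(q_c))/(q_d − q_c). -/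

import Mathlib

open MeasureTheory Filter Set
open scoped ENNReal

variable {Ω : Type*} [MeasurableSpace Ω]

/-- Densities of probability measures absolutely continuous w.r.t. `P`. -/
def Dens (P : Measure Ω) : Set (Ω → ℝ) :=
  {Z | Measurable Z ∧ (∀ ω, 0 ≤ Z ω) ∧ ∫⁻ ω, ENNReal.ofReal (Z ω) ∂P = 1}

/-- `E_Q[X] = E_Q[X⁺] − E_Q[X⁻]` with the convention `∞ − ∞ = −∞`, where `dQ/dP = Z`. -/
noncomputable def eexp (P : Measure Ω) (Z X : Ω → ℝ) : EReal :=
  if (∫⁻ ω, ENNReal.ofReal (-(Z ω * X ω)) ∂P) = ⊤ then ⊥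
  else ((∫⁻ ω, ENNReal.ofReal (Z ω * X ω) ∂P : ℝ≥0∞) : EReal)
    - ((∫⁻ ω, ENNReal.ofReal (-(Z ω * X ω)) ∂P : ℝ≥0∞) : EReal)

/-- Coherent utility function determined by a set of densities `D`. -/
noncomputable def cohU (P : Measure Ω) (D : Set (Ω → ℝ)) (X : Ω → ℝ) : EReal :=
  ⨅ Z ∈ D, eexp P Z X

/-- The weak `L¹`-space associated with `D`. -/
def Lw (P : Measure Ω) (D : Set (Ω → ℝ)) : Set (Ω → ℝ) :=
  {X | Measurable X ∧ ⊥ < cohU P D X ∧ ⊥ < cohU P D (fun ω => -X ω)}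

noncomputable def tailSup (P : Measure Ω) (D : Set (Ω → ℝ)) (X : Ω → ℝ) (n : ℕ) : ℝ≥0∞ :=
  ⨆ Z ∈ D, ∫⁻ ω in {ω | (n : ℝ) < |X ω|}, ENNReal.ofReal (Z ω * |X ω|) ∂P

/-- The strong `L¹`-space associated with `D`. -/
def Ls (P : Measure Ω) (D : Set (Ω → ℝ)) : Set (Ω → ℝ) :=
  {X | Measurable X ∧ Tendsto (tailSup P D X) atTop (nhds 0)}

/-- Risk-neutral densities for the set `A` of attainable P&Ls. -/
def RiskNeutral (P : Measure Ω) (A : Set (Ω → ℝ)) : Set (Ω → ℝ) :=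
  {Z | Z ∈ Dens P ∧ ∀ X ∈ A, eexp P Z X ≤ 0}

/-- `A` is `D`-consistent. -/
def DConsistent (P : Measure Ω) (D A : Set (Ω → ℝ)) : Prop :=
  ∃ A' ⊆ A ∩ Ls P D, D ∩ RiskNeutral P A = D ∩ RiskNeutral P A'

/-- Sequential compactness of `D` in the weak topology `σ(L¹, L^∞)`. -/
def WSeqCompact (P : Measure Ω) (D : Set (Ω → ℝ)) : Prop :=
  ∀ Z : ℕ → Ω → ℝ, (∀ n, Z n ∈ D) → ∃ W ∈ D, ∃ φ : ℕ → ℕ, StrictMono φ ∧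
    ∀ g : Ω → ℝ, Measurable g → (∃ C : ℝ, ∀ ω, |g ω| ≤ C) →
      Tendsto (fun k => ∫ ω, Z (φ k) ω * g ω ∂P) atTop (nhds (∫ ω, W ω * g ω ∂P))

/-- `D` is closed under `L¹`-convergence (within densities). -/
def L1Closed (P : Measure Ω) (D : Set (Ω → ℝ)) : Prop :=
  ∀ Z : ℕ → Ω → ℝ, (∀ n, Z n ∈ D) → ∀ W ∈ Dens P,
    Tendsto (fun n => ∫ ω, |Z n ω - W ω| ∂P) atTop (nhds 0) → W ∈ D


/-- The determining set `D_λ = {Q ∈ 𝒫 : dQ/dP ≤ λ⁻¹}` of Tail V@R of order `λ`. -/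
def TVDens (P : Measure Ω) (l : ℝ) : Set (Ω → ℝ) :=
  {Z | Z ∈ Dens P ∧ ∀ ω, Z ω ≤ l⁻¹}

/-- Tail V@R utility `u_λ(X) = inf_{Q ∈ D_λ} E_Q[X]` as a real number. -/
noncomputable def tvU (P : Measure Ω) (l : ℝ) (X : Ω → ℝ) : ℝ :=
  sInf {r : ℝ | ∃ W ∈ TVDens P l, r = ∫ ω, W ω * X ω ∂P}

/-!
A density bounded by `λ⁻¹` gives a payoff `G` its least expectation when it equals `λ⁻¹` on an
event `E` of probability `λ` that is a sublevel set of `G`. Suppose that `E` is such a set for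
`G = h (S₁ - S₀) - F` and that `S₁ - S₀` averages to zero on `E`. Then `h` superhedges `F` at the
price of the average of `F` over `E`, and no smaller price is possible since `P(· | E)` is
risk-neutral; so this average is the upper price.

For `F = f(S₁)` with `f` convex and `E = {S₁ ∉ (p, r)}`, the slope of the chord of `f` over
`[p, r]` is such an `h`, because `f` lies below the chord on `[p, r]` and above its extension
outside. Conversely, mass near `p` and near `r` can be exchanged between `E` and its complement, so
for an optimal `h` the function `h (x - S₀) - f x` takes the same value at `p` and at `r`, which
determines `h`. The bounds `u(S₁) < S₀ < -u(-S₁)` keep the quantiles `p` and `r` inside the support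
of the law. The lower price is the same argument for `-F` and `E = {S₁ ∈ (p, r)}`.
-/

section TailDensities

variable {P : Measure Ω} {l : ℝ} {E A B : Set Ω} {Z G : Ω → ℝ}

lemma integral_eq_one_of_mem_Dens (hZ : Z ∈ Dens P) : ∫ ω, Z ω ∂P = 1 := by
  rw [integral_eq_lintegral_of_nonneg_ae (ae_of_all _ hZ.2.1) hZ.1.aestronglyMeasurable, hZ.2.2,
    ENNReal.toReal_one]

lemma integrable_mul_of_mem_TVDens (hZ : Z ∈ TVDens P l) (hG : Integrable G P) :
    Integrable (fun ω => Z ω * G ω) P := by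
  refine hG.bdd_mul (c := l⁻¹) hZ.1.1.aestronglyMeasurable (ae_of_all _ fun ω => ?_)
  rw [Real.norm_of_nonneg (hZ.1.2.1 ω)]
  exact hZ.2 ω

lemma integral_mul_add_const_of_mem_TVDens [IsFiniteMeasure P] (hZ : Z ∈ TVDens P l)
    (hG : Integrable G P) (x : ℝ) :
    ∫ ω, Z ω * (G ω + x) ∂P = ∫ ω, Z ω * G ω ∂P + x := by
  simp only [mul_add]
  rw [integral_add (integrable_mul_of_mem_TVDens hZ hG)
      (integrable_mul_of_mem_TVDens hZ (integrable_const x)),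
    integral_mul_const, integral_eq_one_of_mem_Dens hZ.1, one_mul]

lemma mem_TVDens_of_integral_eq_one (hmeas : Measurable Z) (h0 : ∀ ω, 0 ≤ Z ω)
    (hl : ∀ ω, Z ω ≤ l⁻¹) (hint : Integrable Z P) (hone : ∫ ω, Z ω ∂P = 1) : Z ∈ TVDens P l := by
  refine ⟨⟨hmeas, h0, ?_⟩, hl⟩
  rw [← ofReal_integral_eq_lintegral_ofReal hint (ae_of_all _ h0), hone, ENNReal.ofReal_one]

lemma ae_eq_one_of_mem_TVDens_one [IsProbabilityMeasure P] (hZ : Z ∈ TVDens P 1) :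
    Z =ᵐ[P] fun _ => 1 := by
  have hint : Integrable Z P := by
    simpa only [mul_one] using integrable_mul_of_mem_TVDens hZ (integrable_const (1 : ℝ))
  refine (integral_eq_iff_of_ae_le hint (integrable_const 1)
    (ae_of_all _ fun ω => (hZ.2 ω).trans_eq inv_one)).1 ?_
  simp only [integral_eq_one_of_mem_Dens hZ.1, integral_const, probReal_univ, one_smul]

lemma eexp_eq_integral (h : Integrable (fun ω => Z ω * G ω) P) :
    eexp P Z G = ((∫ ω, Z ω * G ω ∂P : ℝ) : EReal) := by
  have hpos : ∫⁻ ω, ENNReal.ofReal (Z ω * G ω) ∂P ≠ ⊤ := h.lintegral_lt_top.ne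
  have hneg : ∫⁻ ω, ENNReal.ofReal (-(Z ω * G ω)) ∂P ≠ ⊤ := h.neg.lintegral_lt_top.ne
  rw [eexp, if_neg hneg, integral_eq_lintegral_pos_part_sub_lintegral_neg_part h,
    EReal.coe_sub, EReal.coe_ennreal_toReal hpos, EReal.coe_ennreal_toReal hneg]

lemma zero_le_cohU_add_const_iff [IsFiniteMeasure P] (hG : Integrable G P) (x : ℝ) :
    0 ≤ cohU P (TVDens P l) (fun ω => G ω + x) ↔
      ∀ Z ∈ TVDens P l, -x ≤ ∫ ω, Z ω * G ω ∂P := by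
  rw [cohU, le_iInf₂_iff]
  refine forall₂_congr fun Z hZ => ?_
  rw [eexp_eq_integral (integrable_mul_of_mem_TVDens hZ (hG.fun_add (integrable_const x))),
    EReal.coe_nonneg, integral_mul_add_const_of_mem_TVDens hZ hG, neg_le_iff_add_nonneg]

/-- The density of the conditional probability `P(· | E)` with respect to `P`. When `P E = l` it is
an extreme point of `TVDens P l`. -/
noncomputable def condDensity (P : Measure Ω) (E : Set Ω) : Ω → ℝ :=
  E.indicator fun _ => (P.real E)⁻¹

lemma condDensity_nonneg (ω : Ω) : 0 ≤ condDensity P E ω :=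
  indicator_nonneg (fun _ _ => inv_nonneg.2 measureReal_nonneg) ω

lemma condDensity_le (ω : Ω) : condDensity P E ω ≤ (P.real E)⁻¹ :=
  indicator_le_self' (fun _ _ => inv_nonneg.2 measureReal_nonneg) ω

lemma measurable_condDensity (hE : MeasurableSet E) : Measurable (condDensity P E) :=
  measurable_const.indicator hE

lemma integral_condDensity_mul (hE : MeasurableSet E) (G : Ω → ℝ) :
    ∫ ω, condDensity P E ω * G ω ∂P = ⨍ ω in E, G ω ∂P := by
  have hmul : (fun ω => condDensity P E ω * G ω) = E.indicator fun ω => (P.real E)⁻¹ * G ω := by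
    ext ω
    exact (indicator_mul_left E (fun _ => (P.real E)⁻¹) G).symm
  rw [hmul, integral_indicator hE, integral_const_mul, setAverage_eq, smul_eq_mul]

lemma condDensity_mem_TVDens [IsFiniteMeasure P] (hE : MeasurableSet E) (hE0 : P E ≠ 0) :
    condDensity P E ∈ TVDens P (P.real E) := by
  refine mem_TVDens_of_integral_eq_one (measurable_condDensity hE) condDensity_nonneg
    condDensity_le ((integrable_const _).indicator hE) ?_
  simpa [setAverage_const hE0 (measure_ne_top P E)] using
    integral_condDensity_mul (P := P) hE fun _ => (1 : ℝ)

lemma integral_shift_mass_mul [IsFiniteMeasure P] (hE : MeasurableSet E) (hA : MeasurableSet A)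
    (hB : MeasurableSet B) (hE0 : P E ≠ 0) (hA0 : P A ≠ 0) (hB0 : P B ≠ 0) (hG : Integrable G P)
    (ε : ℝ) :
    ∫ ω, (condDensity P E ω + ε * (condDensity P B ω - condDensity P A ω)) * G ω ∂P =
      ⨍ ω in E, G ω ∂P + ε * (⨍ ω in B, G ω ∂P - ⨍ ω in A, G ω ∂P) := by
  have hint {C : Set Ω} (hC : MeasurableSet C) (hC0 : P C ≠ 0) :
      Integrable (fun ω => condDensity P C ω * G ω) P :=
    integrable_mul_of_mem_TVDens (condDensity_mem_TVDens hC hC0) hG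
  simp only [add_mul, mul_assoc, sub_mul]
  have hdiff : Integrable
      (fun ω => condDensity P B ω * G ω - condDensity P A ω * G ω) P :=
    (hint hB hB0).sub (hint hA hA0)
  rw [integral_add (hint hE hE0) (hdiff.const_mul ε), integral_const_mul,
    integral_sub (hint hB hB0) (hint hA hA0)]
  simp only [integral_condDensity_mul, hE, hA, hB]

lemma shift_mass_mem_TVDens [IsFiniteMeasure P] (hE : MeasurableSet E) (hA : MeasurableSet A)
    (hB : MeasurableSet B) (hAE : A ⊆ E) (hBE : B ⊆ Eᶜ) (hA0 : P A ≠ 0) (hB0 : P B ≠ 0) {ε : ℝ}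
    (hε : 0 ≤ ε) (hεA : ε * (P.real A)⁻¹ ≤ (P.real E)⁻¹)
    (hεB : ε * (P.real B)⁻¹ ≤ (P.real E)⁻¹) :
    (fun ω => condDensity P E ω + ε * (condDensity P B ω - condDensity P A ω)) ∈
      TVDens P (P.real E) := by
  have hE0 : P E ≠ 0 := fun h => hA0 (measure_mono_null hAE h)
  have hbounds (ω : Ω) :
      0 ≤ condDensity P E ω + ε * (condDensity P B ω - condDensity P A ω) ∧
        condDensity P E ω + ε * (condDensity P B ω - condDensity P A ω) ≤ (P.real E)⁻¹ := by
    by_cases hω : ω ∈ E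
    · have hωB : ω ∉ B := fun h => hBE h hω
      have hA' : ε * condDensity P A ω ≤ (P.real E)⁻¹ :=
        (mul_le_mul_of_nonneg_left (condDensity_le ω) hε).trans hεA
      have hA'' := mul_nonneg hε (condDensity_nonneg (P := P) (E := A) ω)
      simp only [condDensity, indicator_of_mem hω, indicator_of_notMem hωB] at hA' hA'' ⊢
      constructor <;> linarith
    · have hωA : ω ∉ A := fun h => hω (hAE h)
      have hB' : ε * condDensity P B ω ≤ (P.real E)⁻¹ :=
        (mul_le_mul_of_nonneg_left (condDensity_le ω) hε).trans hεB
      have hB'' := mul_nonneg hε (condDensity_nonneg (P := P) (E := B) ω)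
      simp only [condDensity, indicator_of_notMem hω, indicator_of_notMem hωA] at hB' hB'' ⊢
      constructor <;> linarith
  have hint {C : Set Ω} (hC : MeasurableSet C) : Integrable (condDensity P C) P :=
    (integrable_const _).indicator hC
  refine mem_TVDens_of_integral_eq_one ?_ (fun ω => (hbounds ω).1) (fun ω => (hbounds ω).2)
    ((hint hE).add (((hint hB).sub (hint hA)).const_mul ε)) ?_
  · exact (measurable_condDensity hE).add
      (((measurable_condDensity hB).sub (measurable_condDensity hA)).const_mul ε)
  · simpa [setAverage_const, hE0, hA0, hB0] using
      integral_shift_mass_mul hE hA hB hE0 hA0 hB0 (integrable_const (1 : ℝ)) ε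

end TailDensities

section TailEvents

variable {P : Measure Ω} {E A B : Set Ω} {G : Ω → ℝ}

/-- `E` is a worst-case event for the payoff `G`: among all densities admissible for Tail V@R of
order `P E`, that of `P(· | E)` gives `G` the least expectation. -/
def IsTailEvent (P : Measure Ω) (E : Set Ω) (G : Ω → ℝ) : Prop :=
  ∀ Z ∈ TVDens P (P.real E), ⨍ ω in E, G ω ∂P ≤ ∫ ω, Z ω * G ω ∂P

/-- `E` is, up to a null set, a sublevel set of `G`; how the level `{G = m}` is split between `E`
and its complement is left free. -/
def IsAESublevel (P : Measure Ω) (E : Set Ω) (G : Ω → ℝ) : Prop :=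
  ∃ m, (∀ᵐ ω ∂P, ω ∈ E → G ω ≤ m) ∧ ∀ᵐ ω ∂P, ω ∉ E → m ≤ G ω

lemma IsAESublevel.compl_neg (h : IsAESublevel P E G) : IsAESublevel P Eᶜ fun ω => -G ω := by
  obtain ⟨m, hle, hge⟩ := h
  refine ⟨-m, hge.mono fun ω hω hωE => neg_le_neg (hω hωE), hle.mono fun ω hω hωE => ?_⟩
  exact neg_le_neg (hω (not_not.1 hωE))

lemma IsAESublevel.isTailEvent [IsFiniteMeasure P] (h : IsAESublevel P E G)
    (hE : MeasurableSet E) (hE0 : P E ≠ 0) (hG : Integrable G P) : IsTailEvent P E G := by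
  intro Z hZ
  obtain ⟨m, hle, hge⟩ := h
  have hW := condDensity_mem_TVDens hE hE0
  have hGm : Integrable (fun ω => G ω + -m) P := hG.add (integrable_const _)
  have hmono : ∫ ω, condDensity P E ω * (G ω + -m) ∂P ≤ ∫ ω, Z ω * (G ω + -m) ∂P := by
    refine integral_mono_ae (integrable_mul_of_mem_TVDens hW hGm)
      (integrable_mul_of_mem_TVDens hZ hGm) ?_
    filter_upwards [hle, hge] with ω hle hge
    by_cases hω : ω ∈ E
    · simp only [condDensity, indicator_of_mem hω]
      exact mul_le_mul_of_nonpos_right (hZ.2 ω) (by linarith [hle hω])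
    · simp only [condDensity, indicator_of_notMem hω, zero_mul]
      exact mul_nonneg (hZ.1.2.1 ω) (by linarith [hge hω])
  rw [integral_mul_add_const_of_mem_TVDens hW hG, integral_mul_add_const_of_mem_TVDens hZ hG,
    integral_condDensity_mul hE] at hmono
  linarith

lemma IsTailEvent.tvU_eq_setAverage [IsFiniteMeasure P] (h : IsTailEvent P E G)
    (hE : MeasurableSet E) (hE0 : P E ≠ 0) : tvU P (P.real E) G = ⨍ ω in E, G ω ∂P := by
  refine IsLeast.csInf_eq ⟨⟨_, condDensity_mem_TVDens hE hE0, ?_⟩, ?_⟩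
  · exact (integral_condDensity_mul hE G).symm
  · rintro _ ⟨Z, hZ, rfl⟩
    exact h Z hZ

lemma tvU_one [IsProbabilityMeasure P] (G : Ω → ℝ) : tvU P 1 G = ∫ ω, G ω ∂P := by
  have htail : IsTailEvent P univ G := by
    rw [IsTailEvent, probReal_univ]
    intro Z hZ
    rw [Measure.restrict_univ, average_eq_integral]
    refine (integral_congr_ae ?_).le
    filter_upwards [ae_eq_one_of_mem_TVDens_one hZ] with ω hω
    rw [hω, one_mul]
  have htvU := htail.tvU_eq_setAverage MeasurableSet.univ (NeZero.ne (P univ))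
  rwa [probReal_univ, Measure.restrict_univ, average_eq_integral] at htvU

lemma IsTailEvent.setAverage_le_setAverage [IsFiniteMeasure P] (h : IsTailEvent P E G)
    (hE : MeasurableSet E) (hA : MeasurableSet A) (hB : MeasurableSet B) (hAE : A ⊆ E)
    (hBE : B ⊆ Eᶜ) (hA0 : P A ≠ 0) (hB0 : P B ≠ 0) (hG : Integrable G P) :
    ⨍ ω in A, G ω ∂P ≤ ⨍ ω in B, G ω ∂P := by
  have hE0 : P E ≠ 0 := fun h => hA0 (measure_mono_null hAE h)
  have hpos {C : Set Ω} (hC : P C ≠ 0) : 0 < P.real C :=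
    measureReal_nonneg.lt_of_ne' ((measureReal_ne_zero_iff (measure_ne_top P C)).2 hC)
  have hEpos := hpos hE0
  have hApos := hpos hA0
  have hBpos := hpos hB0
  obtain ⟨ε, hε, hεA, hεB⟩ : ∃ ε, 0 < ε ∧ ε ≤ (P.real E)⁻¹ * P.real A ∧
      ε ≤ (P.real E)⁻¹ * P.real B :=
    ⟨min ((P.real E)⁻¹ * P.real A) ((P.real E)⁻¹ * P.real B), by positivity, min_le_left _ _,
      min_le_right _ _⟩
  have hZ := h _ (shift_mass_mem_TVDens hE hA hB hAE hBE hA0 hB0 hε.le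
    ((mul_inv_le_iff₀ hApos).2 hεA) ((mul_inv_le_iff₀ hBpos).2 hεB))
  rw [integral_shift_mass_mul hE hA hB hE0 hA0 hB0 hG] at hZ
  exact sub_nonneg.1 ((mul_nonneg_iff_of_pos_left hε).1 (le_add_iff_nonneg_right _ |>.1 hZ))

end TailEvents

section Prices

variable {P : Measure Ω} {D : Set (Ω → ℝ)} {E : Set Ω} {X F : Ω → ℝ}

/-- The upper no-good-deals price `V̄(F)` when the utility is determined by `D` and the attainable
P&Ls are the multiples of `X`. -/
noncomputable def upperPrice (P : Measure Ω) (D : Set (Ω → ℝ)) (X F : Ω → ℝ) : ℝ :=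
  sInf {x : ℝ | ∃ h : ℝ, 0 ≤ cohU P D fun ω => h * X ω - F ω + x}

/-- The lower no-good-deals price `V̲(F)`, in the setting of `upperPrice`. -/
noncomputable def lowerPrice (P : Measure Ω) (D : Set (Ω → ℝ)) (X F : Ω → ℝ) : ℝ :=
  sSup {x : ℝ | ∃ h : ℝ, 0 ≤ cohU P D fun ω => h * X ω + F ω - x}

/-- The set `H̄(F)` of superhedging strategies, in the setting of `upperPrice`. -/
def superhedges (P : Measure Ω) (D : Set (Ω → ℝ)) (X F : Ω → ℝ) : Set ℝ :=
  {h : ℝ | 0 ≤ cohU P D fun ω => h * X ω - F ω + upperPrice P D X F}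

/-- The set `H̲(F)` of subhedging strategies, in the setting of `upperPrice`. -/
def subhedges (P : Measure Ω) (D : Set (Ω → ℝ)) (X F : Ω → ℝ) : Set ℝ :=
  {h : ℝ | 0 ≤ cohU P D fun ω => h * X ω + F ω - lowerPrice P D X F}

lemma lowerPrice_eq_neg_upperPrice_neg :
    lowerPrice P D X F = -upperPrice P D X fun ω => -F ω := by
  rw [upperPrice, Real.sInf_def, neg_neg, lowerPrice]
  congr 1
  ext x
  simp only [sub_eq_add_neg, neg_neg, mem_ofPred_eq, Set.mem_neg]

lemma subhedges_eq_superhedges_neg : subhedges P D X F = superhedges P D X fun ω => -F ω := by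
  simp only [subhedges, superhedges, lowerPrice_eq_neg_upperPrice_neg, sub_neg_eq_add]

lemma setAverage_const_mul_sub (hX : Integrable X P) (hF : Integrable F P)
    (hX0 : ⨍ ω in E, X ω ∂P = 0) (h : ℝ) :
    ⨍ ω in E, (h * X ω - F ω) ∂P = -⨍ ω in E, F ω ∂P := by
  simp only [setAverage_eq, smul_eq_mul] at hX0 ⊢
  rw [integral_sub (hX.const_mul h).integrableOn hF.integrableOn, integral_const_mul]
  linear_combination h * hX0

variable [IsFiniteMeasure P] {h₀ : ℝ}

lemma zero_le_cohU_hedge_iff_isTailEvent (hX : Integrable X P) (hF : Integrable F P)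
    (hX0 : ⨍ ω in E, X ω ∂P = 0) (h : ℝ) :
    0 ≤ cohU P (TVDens P (P.real E)) (fun ω => h * X ω - F ω + ⨍ ω in E, F ω ∂P) ↔
      IsTailEvent P E fun ω => h * X ω - F ω := by
  rw [zero_le_cohU_add_const_iff (G := fun ω => h * X ω - F ω) ((hX.const_mul h).sub hF),
    ← setAverage_const_mul_sub hX hF hX0 h]
  rfl

theorem upperPrice_eq_setAverage (hE : MeasurableSet E) (hE0 : P E ≠ 0) (hX : Integrable X P)
    (hF : Integrable F P) (hX0 : ⨍ ω in E, X ω ∂P = 0)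
    (htail : IsTailEvent P E fun ω => h₀ * X ω - F ω) :
    upperPrice P (TVDens P (P.real E)) X F = ⨍ ω in E, F ω ∂P := by
  refine IsLeast.csInf_eq
    ⟨⟨h₀, (zero_le_cohU_hedge_iff_isTailEvent hX hF hX0 h₀).2 htail⟩, ?_⟩
  rintro x ⟨h, hx⟩
  have hcond := (zero_le_cohU_add_const_iff (G := fun ω => h * X ω - F ω)
    ((hX.const_mul h).sub hF) x).1 hx _ (condDensity_mem_TVDens hE hE0)
  rw [integral_condDensity_mul hE, setAverage_const_mul_sub hX hF hX0] at hcond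
  exact neg_le_neg_iff.1 hcond

theorem superhedges_eq_setOf_isTailEvent (hE : MeasurableSet E) (hE0 : P E ≠ 0)
    (hX : Integrable X P) (hF : Integrable F P) (hX0 : ⨍ ω in E, X ω ∂P = 0)
    (htail : IsTailEvent P E fun ω => h₀ * X ω - F ω) :
    superhedges P (TVDens P (P.real E)) X F = {h | IsTailEvent P E fun ω => h * X ω - F ω} := by
  ext h
  rw [superhedges, upperPrice_eq_setAverage hE hE0 hX hF hX0 htail]
  exact zero_le_cohU_hedge_iff_isTailEvent hX hF hX0 h

end Prices

section Support

variable {𝓧 : Type*} [TopologicalSpace 𝓧] [MeasurableSpace 𝓧] [OpensMeasurableSpace 𝓧]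
  {μ : Measure 𝓧} {P : Measure Ω} {S : Ω → 𝓧} {T : Set 𝓧} {g : 𝓧 → ℝ} {x y : 𝓧}

lemma mem_support_restrict_of_mem_closure_interior (hx : μ.support ∈ nhds x)
    (hxT : x ∈ closure (interior T)) : x ∈ (μ.restrict T).support := by
  refine closure_minimal Measure.interior_inter_support Measure.isClosed_support ?_
  refine mem_closure_iff_nhds.2 fun U hU => ?_
  obtain ⟨z, ⟨hzU, hzμ⟩, hzT⟩ := mem_closure_iff_nhds.1 hxT _ (inter_mem hU hx)
  exact ⟨z, hzU, hzT, hzμ⟩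

lemma measure_preimage_inter_ne_zero (hS : Measurable S) (hT : MeasurableSet T)
    (hx : x ∈ ((P.map S).restrict T).support) {U : Set 𝓧} (hU : IsOpen U) (hxU : x ∈ U) :
    P (S ⁻¹' (U ∩ T)) ≠ 0 := by
  rw [← Measure.map_apply hS (hU.measurableSet.inter hT),
    ← Measure.restrict_apply hU.measurableSet]
  exact ((Measure.mem_support_iff_forall x).1 hx U (hU.mem_nhds hxU)).ne'

variable [IsFiniteMeasure P]

lemma IsTailEvent.le_of_mem_support (h : IsTailEvent P (S ⁻¹' T) fun ω => g (S ω))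
    (hS : Measurable S) (hT : MeasurableSet T) (hg : Integrable (fun ω => g (S ω)) P)
    (hx : x ∈ ((P.map S).restrict T).support) (hy : y ∈ ((P.map S).restrict Tᶜ).support)
    (hgx : ContinuousAt g x) (hgy : ContinuousAt g y) : g x ≤ g y := by
  by_contra! hlt
  obtain ⟨m₁, hm₁, hm₁x⟩ := exists_between hlt
  obtain ⟨m₂, hm₂, hm₂x⟩ := exists_between hm₁x
  obtain ⟨U, hU, hUo, hxU⟩ := eventually_nhds_iff.1 (hgx.eventually_const_le hm₂x)
  obtain ⟨V, hV, hVo, hyV⟩ := eventually_nhds_iff.1 (hgy.eventually_le_const hm₁)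
  have hU0 := measure_preimage_inter_ne_zero hS hT hx hUo hxU
  have hV0 := measure_preimage_inter_ne_zero hS hT.compl hy hVo hyV
  have hUm : MeasurableSet (S ⁻¹' (U ∩ T)) := hS (hUo.measurableSet.inter hT)
  have hVm : MeasurableSet (S ⁻¹' (V ∩ Tᶜ)) := hS (hVo.measurableSet.inter hT.compl)
  have hlower : m₂ ≤ ⨍ ω in S ⁻¹' (U ∩ T), g (S ω) ∂P :=
    (convex_Ici m₂).set_average_mem isClosed_Ici hU0 (measure_ne_top _ _)
      (ae_restrict_of_forall_mem hUm fun ω hω => hU _ hω.1) hg.integrableOn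
  have hupper : ⨍ ω in S ⁻¹' (V ∩ Tᶜ), g (S ω) ∂P ≤ m₁ :=
    (convex_Iic m₁).set_average_mem isClosed_Iic hV0 (measure_ne_top _ _)
      (ae_restrict_of_forall_mem hVm fun ω hω => hV _ hω.1) hg.integrableOn
  have := h.setAverage_le_setAverage (hS hT) hUm hVm (preimage_mono inter_subset_right)
    (preimage_mono inter_subset_right) hU0 hV0 hg
  linarith

/-- Both points lie on the common boundary of `T` and its complement, so mass near either one can
be moved across the boundary in either direction. -/
lemma IsTailEvent.eq_of_mem_closure_interior (h : IsTailEvent P (S ⁻¹' T) fun ω => g (S ω))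
    (hS : Measurable S) (hT : MeasurableSet T) (hg : Integrable (fun ω => g (S ω)) P)
    (hx : (P.map S).support ∈ nhds x) (hy : (P.map S).support ∈ nhds y)
    (hxT : x ∈ closure (interior T) ∩ closure (interior Tᶜ))
    (hyT : y ∈ closure (interior T) ∩ closure (interior Tᶜ))
    (hgx : ContinuousAt g x) (hgy : ContinuousAt g y) : g x = g y := by
  refine le_antisymm (h.le_of_mem_support hS hT hg ?_ ?_ hgx hgy)
    (h.le_of_mem_support hS hT hg ?_ ?_ hgy hgx)
  · exact mem_support_restrict_of_mem_closure_interior hx hxT.1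
  · exact mem_support_restrict_of_mem_closure_interior hy hyT.2
  · exact mem_support_restrict_of_mem_closure_interior hy hyT.1
  · exact mem_support_restrict_of_mem_closure_interior hx hxT.2

end Support

section Slopes

variable {P : Measure Ω} {S : Ω → ℝ} {f g : ℝ → ℝ} {s T : Set ℝ} {p r S₀ h : ℝ}

lemma isAESublevel_Ioo_sub_slope_mul (hf : ConvexOn ℝ s f) (hp : p ∈ s) (hr : r ∈ s)
    (hpr : p < r) (hS : ∀ᵐ ω ∂P, S ω ∈ s) (S₀ : ℝ) :
    IsAESublevel P (S ⁻¹' Ioo p r) fun ω => f (S ω) - slope f p r * (S ω - S₀) := by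
  have hchord (x : ℝ) : f x - slope f p r * (x - S₀) =
      f p - slope f p r * (p - S₀) + (x - p) * (slope f p x - slope f p r) := by
    have hfx : (x - p) * slope f p x = f x - f p := sub_smul_slope f p x
    linear_combination -hfx
  have hslope := hf.slope_mono hp
  have hr' : r ∈ s \ {p} := ⟨hr, hpr.ne'⟩
  refine ⟨f p - slope f p r * (p - S₀), ?_, ?_⟩
  · filter_upwards [hS] with ω hω ⟨hpω, hωr⟩
    rw [hchord (S ω), add_le_iff_nonpos_right]
    exact mul_nonpos_of_nonneg_of_nonpos (sub_nonneg.2 hpω.le)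
      (sub_nonpos.2 (hslope ⟨hω, hpω.ne'⟩ hr' hωr.le))
  · filter_upwards [hS] with ω hω hωE
    rw [hchord (S ω), le_add_iff_nonneg_right]
    rcases lt_trichotomy (S ω) p with hlt | heq | hgt
    · exact mul_nonneg_of_nonpos_of_nonpos (sub_nonpos.2 hlt.le)
        (sub_nonpos.2 (hslope ⟨hω, hlt.ne⟩ hr' (hlt.trans hpr).le))
    · rw [heq, sub_self, zero_mul]
    · exact mul_nonneg (sub_nonneg.2 hgt.le)
        (sub_nonneg.2 (hslope hr' ⟨hω, hgt.ne'⟩ (not_lt.1 fun hωr => hωE ⟨hgt, hωr⟩)))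

lemma mem_closure_interior_Ioo_inter_compl (hpr : p < r) {x : ℝ} (hx : x = p ∨ x = r) :
    x ∈ closure (interior (Ioo p r)) ∩ closure (interior (Ioo p r)ᶜ) := by
  rw [interior_Ioo, interior_compl, closure_compl, closure_Ioo hpr.ne, interior_Icc]
  rcases hx with rfl | rfl
  · exact ⟨left_mem_Icc.2 hpr.le, fun h => h.1.false⟩
  · exact ⟨right_mem_Icc.2 hpr.le, fun h => h.2.false⟩

variable [IsFiniteMeasure P]

lemma eq_slope_of_isTailEvent
    (htail : IsTailEvent P (S ⁻¹' T) fun ω => h * (S ω - S₀) - g (S ω)) (hS : Measurable S)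
    (hSint : Integrable S P) (hT : MeasurableSet T) (hg : Integrable (fun ω => g (S ω)) P)
    (hpr : p ≠ r) (hp : (P.map S).support ∈ nhds p) (hr : (P.map S).support ∈ nhds r)
    (hpT : p ∈ closure (interior T) ∩ closure (interior Tᶜ))
    (hrT : r ∈ closure (interior T) ∩ closure (interior Tᶜ))
    (hgp : ContinuousAt g p) (hgr : ContinuousAt g r) : h = slope g p r := by
  have hcont {x : ℝ} (hgx : ContinuousAt g x) :
      ContinuousAt (fun y => h * (y - S₀) - g y) x := by fun_prop
  have heq := htail.eq_of_mem_closure_interior (g := fun y => h * (y - S₀) - g y) hS hT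
    (((hSint.sub (integrable_const S₀)).const_mul h).sub hg) hp hr hpT hrT (hcont hgp) (hcont hgr)
  rw [slope_def_field, eq_div_iff (sub_ne_zero.2 hpr.symm)]
  linear_combination -heq

theorem upperPrice_eq_and_superhedges_eq_of_slope (hS : Measurable S) (hSint : Integrable S P)
    (hT : MeasurableSet T) (hT0 : P (S ⁻¹' T) ≠ 0) (hS₀ : ⨍ ω in S ⁻¹' T, S ω ∂P = S₀)
    (hg : Integrable (fun ω => g (S ω)) P)
    (hsub : IsAESublevel P (S ⁻¹' T) fun ω => slope g p r * (S ω - S₀) - g (S ω))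
    (hpr : p ≠ r) (hp : (P.map S).support ∈ nhds p) (hr : (P.map S).support ∈ nhds r)
    (hpT : p ∈ closure (interior T) ∩ closure (interior Tᶜ))
    (hrT : r ∈ closure (interior T) ∩ closure (interior Tᶜ))
    (hgp : ContinuousAt g p) (hgr : ContinuousAt g r) :
    upperPrice P (TVDens P (P.real (S ⁻¹' T))) (fun ω => S ω - S₀) (fun ω => g (S ω)) =
        ⨍ ω in S ⁻¹' T, g (S ω) ∂P ∧
      superhedges P (TVDens P (P.real (S ⁻¹' T))) (fun ω => S ω - S₀) (fun ω => g (S ω)) =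
        {slope g p r} := by
  have hX : Integrable (fun ω => S ω - S₀) P := hSint.sub (integrable_const S₀)
  have hX0 : ⨍ ω in S ⁻¹' T, (S ω - S₀) ∂P = 0 := by
    rw [setAverage_eq, integral_sub hSint.integrableOn (integrable_const S₀).integrableOn,
      smul_sub, ← setAverage_eq, ← setAverage_eq, hS₀, setAverage_const hT0 (measure_ne_top _ _),
      sub_self]
  have htail := hsub.isTailEvent (hS hT) hT0 ((hX.const_mul (slope g p r)).sub hg)
  refine ⟨upperPrice_eq_setAverage (hS hT) hT0 hX hg hX0 htail, ?_⟩
  rw [superhedges_eq_setOf_isTailEvent (hS hT) hT0 hX hg hX0 htail]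
  refine Subset.antisymm (fun h hh => ?_) (singleton_subset_iff.2 htail)
  exact eq_slope_of_isTailEvent hh hS hSint hT hg hpr hp hr hpT hrT hgp hgr

theorem upperPrice_eq_and_superhedges_eq_of_convexOn (hS : Measurable S) (hSint : Integrable S P)
    (hf : ConvexOn ℝ (P.map S).support f) (hfint : Integrable (fun ω => f (S ω)) P)
    (hpr : p < r) (hp : (P.map S).support ∈ nhds p) (hr : (P.map S).support ∈ nhds r)
    (hE0 : P (S ⁻¹' (Ioo p r)ᶜ) ≠ 0) (hS₀ : ⨍ ω in S ⁻¹' (Ioo p r)ᶜ, S ω ∂P = S₀) :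
    upperPrice P (TVDens P (P.real (S ⁻¹' (Ioo p r)ᶜ))) (fun ω => S ω - S₀) (fun ω => f (S ω)) =
        ⨍ ω in S ⁻¹' (Ioo p r)ᶜ, f (S ω) ∂P ∧
      superhedges P (TVDens P (P.real (S ⁻¹' (Ioo p r)ᶜ))) (fun ω => S ω - S₀)
        (fun ω => f (S ω)) = {slope f p r} := by
  have hsub := (isAESublevel_Ioo_sub_slope_mul hf (mem_of_mem_nhds hp) (mem_of_mem_nhds hr) hpr
    (ae_of_ae_map hS.aemeasurable Measure.support_mem_ae) S₀).compl_neg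
  simp only [neg_sub] at hsub
  have hboundary {x : ℝ} (hx : x = p ∨ x = r) :
      x ∈ closure (interior (Ioo p r)ᶜ) ∩ closure (interior (Ioo p r)ᶜᶜ) := by
    rw [compl_compl, inter_comm]
    exact mem_closure_interior_Ioo_inter_compl hpr hx
  exact upperPrice_eq_and_superhedges_eq_of_slope hS hSint measurableSet_Ioo.compl hE0 hS₀ hfint
    hsub hpr.ne hp hr (hboundary (.inl rfl)) (hboundary (.inr rfl))
    (hf.continuousOn_interior.continuousAt (interior_mem_nhds.2 hp))
    (hf.continuousOn_interior.continuousAt (interior_mem_nhds.2 hr))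

theorem lowerPrice_eq_and_subhedges_eq_of_convexOn (hS : Measurable S) (hSint : Integrable S P)
    (hf : ConvexOn ℝ (P.map S).support f) (hfint : Integrable (fun ω => f (S ω)) P)
    (hpr : p < r) (hp : (P.map S).support ∈ nhds p) (hr : (P.map S).support ∈ nhds r)
    (hE0 : P (S ⁻¹' Ioo p r) ≠ 0) (hS₀ : ⨍ ω in S ⁻¹' Ioo p r, S ω ∂P = S₀) :
    lowerPrice P (TVDens P (P.real (S ⁻¹' Ioo p r))) (fun ω => S ω - S₀) (fun ω => f (S ω)) =
        ⨍ ω in S ⁻¹' Ioo p r, f (S ω) ∂P ∧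
      subhedges P (TVDens P (P.real (S ⁻¹' Ioo p r))) (fun ω => S ω - S₀)
        (fun ω => f (S ω)) = {-slope f p r} := by
  have hslope : slope (fun x => -f x) p r = -slope f p r := congrFun₂ (slope_neg_fun f) p r
  have hsub : IsAESublevel P (S ⁻¹' Ioo p r) fun ω =>
      slope (fun x => -f x) p r * (S ω - S₀) - -f (S ω) := by
    simpa only [hslope, neg_mul, sub_neg_eq_add, neg_add_eq_sub] using
      isAESublevel_Ioo_sub_slope_mul hf (mem_of_mem_nhds hp) (mem_of_mem_nhds hr) hpr
        (ae_of_ae_map hS.aemeasurable Measure.support_mem_ae) S₀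
  have hupper := upperPrice_eq_and_superhedges_eq_of_slope (g := fun x => -f x) hS hSint
    measurableSet_Ioo hE0 hS₀ hfint.neg hsub hpr.ne hp hr
    (mem_closure_interior_Ioo_inter_compl hpr (.inl rfl))
    (mem_closure_interior_Ioo_inter_compl hpr (.inr rfl))
    (hf.continuousOn_interior.continuousAt (interior_mem_nhds.2 hp)).neg
    (hf.continuousOn_interior.continuousAt (interior_mem_nhds.2 hr)).neg
  rw [lowerPrice_eq_neg_upperPrice_neg, subhedges_eq_superhedges_neg, hupper.1, hupper.2, hslope,
    setAverage_eq, integral_neg, smul_neg, neg_neg, ← setAverage_eq]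
  exact ⟨rfl, rfl⟩

end Slopes

section Quantiles

lemma lt_of_measureReal_Iic_lt {α : Type*} [MeasurableSpace α] [LinearOrder α] {μ : Measure α}
    [IsFiniteMeasure μ] {x y : α} (h : μ.real (Iic x) < μ.real (Iic y)) : x < y :=
  lt_of_not_ge fun hyx => h.not_ge (measureReal_mono (Iic_subset_Iic.2 hyx))

variable {P : Measure Ω} {S G : Ω → ℝ} {E : Set Ω} {g : ℝ → ℝ} {p r : ℝ}

lemma isAESublevel_Ioo_of_ae_lt (hp : ∀ᵐ ω ∂P, p < S ω) : IsAESublevel P (S ⁻¹' Ioo p r) S :=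
  ⟨r, ae_of_all _ fun _ hω => hω.2.le,
    hp.mono fun _ hω hωE => not_lt.1 fun hωr => hωE ⟨hω, hωr⟩⟩

lemma isAESublevel_Ioo_neg_of_ae_lt (hr : ∀ᵐ ω ∂P, S ω < r) :
    IsAESublevel P (S ⁻¹' Ioo p r) fun ω => -S ω :=
  ⟨-p, ae_of_all _ fun _ hω => neg_le_neg hω.1.le,
    hr.mono fun _ hω hωE => neg_le_neg (not_lt.1 fun hpω => hωE ⟨hpω, hω⟩)⟩

lemma setAverage_preimage_compl_Ioo (hS : Measurable S) (hg : Integrable g (P.map S))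
    (hpr : p < r) :
    ⨍ ω in S ⁻¹' (Ioo p r)ᶜ, g (S ω) ∂P = (P.real (S ⁻¹' (Ioo p r)ᶜ))⁻¹ *
      (∫ x in Iic p, g x ∂P.map S + ∫ x in Ici r, g x ∂P.map S) := by
  rw [setAverage_eq, smul_eq_mul, ← setIntegral_map measurableSet_Ioo.compl
    hg.aestronglyMeasurable hS.aemeasurable, ← setIntegral_union
    (Iic_disjoint_Ici.2 hpr.not_ge) measurableSet_Ici hg.integrableOn hg.integrableOn]
  congr 3
  ext x
  simp only [mem_compl_iff, mem_Ioo, mem_union, mem_Iic, mem_Ici, not_and_or, not_lt]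

lemma setAverage_preimage_Ioo [NullSingletonClass (P.map S)] (hS : Measurable S)
    (hg : Integrable g (P.map S)) :
    ⨍ ω in S ⁻¹' Ioo p r, g (S ω) ∂P =
      (P.real (S ⁻¹' Ioo p r))⁻¹ * ∫ x in Icc p r, g x ∂P.map S := by
  rw [setAverage_eq, smul_eq_mul, ← setIntegral_map measurableSet_Ioo hg.aestronglyMeasurable
    hS.aemeasurable, integral_Icc_eq_integral_Ioo]

lemma support_map_mem_nhds [NullSingletonClass (P.map S)] (hS : Measurable S)
    (hconv : Convex ℝ (P.map S).support) {x : ℝ}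
    (hlow : ¬ ∀ᵐ ω ∂P, x < S ω) (hup : ¬ ∀ᵐ ω ∂P, S ω < x) :
    (P.map S).support ∈ nhds x := by
  have hIio : 0 < P.map S (Iio x) := by
    rw [measure_congr Iio_ae_eq_Iic, Measure.map_apply hS measurableSet_Iic]
    exact pos_iff_ne_zero.2 fun h =>
      hlow ((measure_eq_zero_iff_ae_notMem.1 h).mono fun _ hω => not_le.1 hω)
  have hIoi : 0 < P.map S (Ioi x) := by
    rw [measure_congr Ioi_ae_eq_Ici, Measure.map_apply hS measurableSet_Ici]
    exact pos_iff_ne_zero.2 fun h =>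
      hup ((measure_eq_zero_iff_ae_notMem.1 h).mono fun _ hω => not_le.1 hω)
  obtain ⟨y, hyx, hy⟩ := Measure.nonempty_inter_support_of_pos hIio
  obtain ⟨z, hxz, hz⟩ := Measure.nonempty_inter_support_of_pos hIoi
  exact mem_of_superset (Icc_mem_nhds hyx hxz) (hconv.ordConnected.out hy hz)

variable [IsFiniteMeasure P]

lemma not_isAESublevel_of_tvU_lt (hE : MeasurableSet E) (hE0 : P E ≠ 0) (hG : Integrable G P)
    (hlt : tvU P (P.real E) G < ⨍ ω in E, G ω ∂P) : ¬ IsAESublevel P E G := fun h =>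
  hlt.ne ((h.isTailEvent hE hE0 hG).tvU_eq_setAverage hE hE0)

lemma not_isAESublevel_neg_of_lt_neg_tvU_neg (hE : MeasurableSet E) (hE0 : P E ≠ 0)
    (hG : Integrable G P) (hlt : ⨍ ω in E, G ω ∂P < -tvU P (P.real E) fun ω => -G ω) :
    ¬ IsAESublevel P E fun ω => -G ω := by
  refine not_isAESublevel_of_tvU_lt hE hE0 hG.neg ?_
  rwa [setAverage_eq, integral_neg, smul_neg, ← setAverage_eq, lt_neg]

lemma not_ae_lt_of_tvU_bounds_Ioo (hS : Measurable S) (hSint : Integrable S P)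
    (hE0 : P (S ⁻¹' Ioo p r) ≠ 0)
    (hlow : tvU P (P.real (S ⁻¹' Ioo p r)) S < ⨍ ω in S ⁻¹' Ioo p r, S ω ∂P)
    (hup : ⨍ ω in S ⁻¹' Ioo p r, S ω ∂P < -tvU P (P.real (S ⁻¹' Ioo p r)) fun ω => -S ω) :
    (¬ ∀ᵐ ω ∂P, p < S ω) ∧ ¬ ∀ᵐ ω ∂P, S ω < r :=
  ⟨mt isAESublevel_Ioo_of_ae_lt
      (not_isAESublevel_of_tvU_lt (hS measurableSet_Ioo) hE0 hSint hlow),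
    mt isAESublevel_Ioo_neg_of_ae_lt
      (not_isAESublevel_neg_of_lt_neg_tvU_neg (hS measurableSet_Ioo) hE0 hSint hup)⟩

lemma not_ae_lt_of_tvU_bounds_compl_Ioo (hS : Measurable S) (hSint : Integrable S P)
    (hE0 : P (S ⁻¹' (Ioo p r)ᶜ) ≠ 0)
    (hlow : tvU P (P.real (S ⁻¹' (Ioo p r)ᶜ)) S < ⨍ ω in S ⁻¹' (Ioo p r)ᶜ, S ω ∂P)
    (hup : ⨍ ω in S ⁻¹' (Ioo p r)ᶜ, S ω ∂P <
      -tvU P (P.real (S ⁻¹' (Ioo p r)ᶜ)) fun ω => -S ω) :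
    (¬ ∀ᵐ ω ∂P, p < S ω) ∧ ¬ ∀ᵐ ω ∂P, S ω < r := by
  have hE := hS (measurableSet_Ioo (a := p) (b := r)).compl
  refine ⟨fun hp => not_isAESublevel_neg_of_lt_neg_tvU_neg hE hE0 hSint hup
    (isAESublevel_Ioo_of_ae_lt hp).compl_neg, fun hr => ?_⟩
  refine not_isAESublevel_of_tvU_lt hE hE0 hSint hlow ?_
  simpa only [neg_neg, preimage_compl] using (isAESublevel_Ioo_neg_of_ae_lt (p := p) hr).compl_neg

lemma real_preimage_Ioo [NullSingletonClass (P.map S)] (hS : Measurable S) (hpr : p ≤ r) :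
    P.real (S ⁻¹' Ioo p r) = (P.map S).real (Iic r) - (P.map S).real (Iic p) := by
  rw [← map_measureReal_apply hS measurableSet_Ioo, measureReal_congr Ioo_ae_eq_Ioc,
    ← Iic_union_Ioc_eq_Iic hpr, measureReal_union (Iic_disjoint_Ioc le_rfl) measurableSet_Ioc,
    add_sub_cancel_left]

end Quantiles

section QuantilePrices

variable {P : Measure Ω} [IsProbabilityMeasure P] {S : Ω → ℝ} [NullSingletonClass (P.map S)]
  {f : ℝ → ℝ} {lam S₀ p r : ℝ}

theorem upperPrice_eq_and_superhedges_eq_of_quantiles (hS : Measurable S)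
    (hSint : Integrable S P) (hlam0 : 0 < lam) (hlow : tvU P lam S < S₀)
    (hup : S₀ < -tvU P lam fun ω => -S ω) (hf : ConvexOn ℝ (P.map S).support f)
    (hfint : Integrable f (P.map S)) (hpr : p < r)
    (hlam : (P.map S).real (Iic p) + (1 - (P.map S).real (Iic r)) = lam)
    (hS₀ : lam⁻¹ * (∫ x in Iic p, x ∂P.map S + ∫ x in Ici r, x ∂P.map S) = S₀) :
    upperPrice P (TVDens P lam) (fun ω => S ω - S₀) (fun ω => f (S ω)) =
        lam⁻¹ * (∫ x in Iic p, f x ∂P.map S + ∫ x in Ici r, f x ∂P.map S) ∧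
      superhedges P (TVDens P lam) (fun ω => S ω - S₀) (fun ω => f (S ω)) =
        {(f r - f p) / (r - p)} := by
  obtain rfl : P.real (S ⁻¹' (Ioo p r)ᶜ) = lam := by
    rw [preimage_compl, probReal_compl_eq_one_sub (hS measurableSet_Ioo),
      real_preimage_Ioo hS hpr.le]
    linear_combination hlam
  have hE0 : P (S ⁻¹' (Ioo p r)ᶜ) ≠ 0 := (measureReal_ne_zero_iff).1 hlam0.ne'
  have hSint' : Integrable id (P.map S) :=
    (integrable_map_measure aestronglyMeasurable_id hS.aemeasurable).2 hSint
  have hmean : ⨍ ω in S ⁻¹' (Ioo p r)ᶜ, S ω ∂P = S₀ :=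
    (setAverage_preimage_compl_Ioo hS hSint' hpr).trans hS₀
  obtain ⟨hp, hr⟩ := not_ae_lt_of_tvU_bounds_compl_Ioo hS hSint hE0 (hmean ▸ hlow) (hmean ▸ hup)
  have hmain := upperPrice_eq_and_superhedges_eq_of_convexOn hS hSint hf
    (hfint.comp_measurable hS) hpr
    (support_map_mem_nhds hS hf.1 hp fun h => hr (h.mono fun _ hω => hω.trans hpr))
    (support_map_mem_nhds hS hf.1 (fun h => hp (h.mono fun _ hω => hpr.trans hω)) hr) hE0 hmean
  rwa [setAverage_preimage_compl_Ioo hS hfint hpr, slope_def_field] at hmain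

theorem lowerPrice_eq_and_subhedges_eq_of_quantiles (hS : Measurable S)
    (hSint : Integrable S P) (hlam0 : 0 < lam) (hlow : tvU P lam S < S₀)
    (hup : S₀ < -tvU P lam fun ω => -S ω) (hf : ConvexOn ℝ (P.map S).support f)
    (hfint : Integrable f (P.map S))
    (hlam : (P.map S).real (Iic r) - (P.map S).real (Iic p) = lam)
    (hS₀ : lam⁻¹ * ∫ x in Icc p r, x ∂P.map S = S₀) :
    lowerPrice P (TVDens P lam) (fun ω => S ω - S₀) (fun ω => f (S ω)) =
        lam⁻¹ * ∫ x in Icc p r, f x ∂P.map S ∧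
      subhedges P (TVDens P lam) (fun ω => S ω - S₀) (fun ω => f (S ω)) =
        {-((f r - f p) / (r - p))} := by
  have hpr : p < r := lt_of_measureReal_Iic_lt (sub_pos.1 (hlam ▸ hlam0))
  obtain rfl : P.real (S ⁻¹' Ioo p r) = lam := (real_preimage_Ioo hS hpr.le).trans hlam
  have hE0 : P (S ⁻¹' Ioo p r) ≠ 0 := (measureReal_ne_zero_iff).1 hlam0.ne'
  have hSint' : Integrable id (P.map S) :=
    (integrable_map_measure aestronglyMeasurable_id hS.aemeasurable).2 hSint
  have hmean : ⨍ ω in S ⁻¹' Ioo p r, S ω ∂P = S₀ :=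
    (setAverage_preimage_Ioo hS hSint').trans hS₀
  obtain ⟨hp, hr⟩ := not_ae_lt_of_tvU_bounds_Ioo hS hSint hE0 (hmean ▸ hlow) (hmean ▸ hup)
  have hmain := lowerPrice_eq_and_subhedges_eq_of_convexOn hS hSint hf
    (hfint.comp_measurable hS) hpr
    (support_map_mem_nhds hS hf.1 hp fun h => hr (h.mono fun _ hω => hω.trans hpr))
    (support_map_mem_nhds hS hf.1 (fun h => hp (h.mono fun _ hω => hpr.trans hω)) hr) hE0 hmean
  rwa [setAverage_preimage_Ioo hS hfint, slope_def_field] at hmain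

end QuantilePrices

section HalfLine

variable {μ : Measure ℝ} {f : ℝ → ℝ} {s : Set ℝ} {x₀ C : ℝ}

lemma support_eq_Ici (hIio : μ (Iio x₀) = 0)
    (hIoo : ∀ x, x₀ ≤ x → ∀ ε, 0 < ε → 0 < μ (Ioo (x - ε) (x + ε))) : μ.support = Ici x₀ := by
  refine Subset.antisymm (Measure.support_subset_of_isClosed isClosed_Ici ?_) fun x hx => ?_
  · simpa only [mem_ae_iff, compl_Ici] using hIio
  · refine (Metric.nhds_basis_ball.mem_measureSupport).2 fun ε hε => ?_
    rw [Real.ball_eq_Ioo]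
    exact hIoo x hx ε hε

lemma setIntegral_Icc_eq_setIntegral_Iic (hIio : μ (Iio x₀) = 0) (g : ℝ → ℝ) (y : ℝ) :
    ∫ x in Icc x₀ y, g x ∂μ = ∫ x in Iic y, g x ∂μ := by
  refine setIntegral_congr_set ?_
  filter_upwards [measure_eq_zero_iff_ae_notMem.1 hIio] with x hx
  exact propext (and_iff_right (not_lt.1 hx))

lemma integrable_of_convexOn_of_linear_growth [IsFiniteMeasure μ] (hf : ConvexOn ℝ s f)
    (hs : ∀ᵐ x ∂μ, x ∈ interior s) (hid : Integrable id μ)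
    (hC : ∀ x ∈ s, |f x| ≤ C * (1 + x)) : Integrable f μ := by
  have hmeas : AEStronglyMeasurable f μ := by
    rw [← Measure.restrict_eq_self_of_ae_mem hs]
    exact hf.continuousOn_interior.aestronglyMeasurable measurableSet_interior
  exact (((integrable_const 1).add hid).const_mul C).mono' hmeas
    (hs.mono fun x hx => hC x (interior_subset hx))

end HalfLine

theorem stmt_19_general {P : Measure Ω} [IsProbabilityMeasure P] {S : Ω → ℝ}
    [NullSingletonClass (P.map S)] {f q : ℝ → ℝ} {lam S₀ a b c d : ℝ} (hS : Measurable S)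
    (hSint : Integrable S P) (hlam : 0 < lam)
    (hprice : tvU P lam S < S₀ ∧ S₀ < -tvU P lam fun ω => -S ω)
    (hf : ConvexOn ℝ (P.map S).support f) (hfint : Integrable f (P.map S))
    (hab : a + b = lam) (hcd : d - c = lam)
    (hqa : (P.map S).real (Iic (q a)) = a) (hqb : (P.map S).real (Iic (q (1 - b))) = 1 - b)
    (hqc : (P.map S).real (Iic (q c)) = c) (hqd : (P.map S).real (Iic (q d)) = d)
    (hS₀ab : lam⁻¹ * (∫ x in Iic (q a), x ∂P.map S + ∫ x in Ici (q (1 - b)), x ∂P.map S) = S₀)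
    (hS₀cd : lam⁻¹ * ∫ x in Icc (q c) (q d), x ∂P.map S = S₀) :
    upperPrice P (TVDens P lam) (fun ω => S ω - S₀) (fun ω => f (S ω)) =
        lam⁻¹ * (∫ x in Iic (q a), f x ∂P.map S + ∫ x in Ici (q (1 - b)), f x ∂P.map S) ∧
      lowerPrice P (TVDens P lam) (fun ω => S ω - S₀) (fun ω => f (S ω)) =
        lam⁻¹ * ∫ x in Icc (q c) (q d), f x ∂P.map S ∧
      superhedges P (TVDens P lam) (fun ω => S ω - S₀) (fun ω => f (S ω)) =
        {(f (q (1 - b)) - f (q a)) / (q (1 - b) - q a)} ∧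
      subhedges P (TVDens P lam) (fun ω => S ω - S₀) (fun ω => f (S ω)) =
        {-((f (q d) - f (q c)) / (q d - q c))} := by
  have hlam_ne : lam ≠ 1 := by
    rintro rfl
    simp only [tvU_one, integral_neg, neg_neg] at hprice
    exact hprice.1.asymm hprice.2
  have := Measure.isProbabilityMeasure_map hS.aemeasurable (μ := P)
  have hlam_le : lam ≤ 1 := by
    rw [← hcd, ← hqc, ← hqd]
    exact (sub_le_self _ measureReal_nonneg).trans measureReal_le_one
  have hq : q a < q (1 - b) := lt_of_measureReal_Iic_lt (μ := P.map S) <| by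
    linarith [hlam_le.lt_of_ne hlam_ne]
  obtain ⟨hupper, hsuper⟩ := upperPrice_eq_and_superhedges_eq_of_quantiles hS hSint hlam hprice.1
    hprice.2 hf hfint hq (by linarith) hS₀ab
  obtain ⟨hlower, hsub⟩ := lowerPrice_eq_and_subhedges_eq_of_quantiles hS hSint hlam hprice.1
    hprice.2 hf hfint (by rw [hqd, hqc, hcd]) hS₀cd
  exact ⟨hupper, hlower, hsuper, hsub⟩

/-- Static one-asset model, Tail V@R of order `λ ∈ (0,1]`, `S_1` integrable
with atomless law `Q` supported exactly on `ℝ_+`, `u(S_1) < S_0 < −u(−S_1)`, `F = f(S_1)` with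
`f` convex of linear growth; `a, b, c, d` chosen with `a + b = λ`, `d − c = λ` and
`λ⁻¹(∫_0^{q_a} x dQ + ∫_{q_{1−b}}^∞ x dQ) = S_0`, `λ⁻¹ ∫_{q_c}^{q_d} x dQ = S_0`.
Then the upper/lower NGD prices and the super- and sub-hedging strategies are given by the
explicit quantile formulas. -/
theorem stmt_19 (P : Measure Ω) [IsProbabilityMeasure P]
    (S0 : ℝ) (hS0pos : 0 < S0) (S1 : Ω → ℝ) (hS1meas : Measurable S1)
    (hS1int : Integrable S1 P)
    (hatomless : ∀ x : ℝ, P.map S1 {x} = 0)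
    (hsupp1 : P.map S1 (Set.Iio 0) = 0)
    (hsupp2 : ∀ x : ℝ, 0 ≤ x → ∀ ε : ℝ, 0 < ε → 0 < P.map S1 (Set.Ioo (x - ε) (x + ε)))
    (lam : ℝ) (hlam : lam ∈ Set.Ioc (0 : ℝ) 1)
    (hprice : tvU P lam S1 < S0 ∧ S0 < -(tvU P lam (fun ω => -S1 ω)))
    (f : ℝ → ℝ) (hfconv : ConvexOn ℝ (Set.Ici 0) f)
    (hflin : ∃ C : ℝ, ∀ x : ℝ, 0 ≤ x → |f x| ≤ C * (1 + x))
    (a b c d : ℝ) (ha : 0 ≤ a) (hb : 0 ≤ b) (hab : a + b = lam)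
    (hc : 0 ≤ c) (hd : d ≤ 1) (hcd : d - c = lam)
    (q : ℝ → ℝ)
    (hqa : 0 ≤ q a ∧ P.map S1 (Set.Iic (q a)) = ENNReal.ofReal a)
    (hqb : 0 ≤ q (1 - b) ∧ P.map S1 (Set.Iic (q (1 - b))) = ENNReal.ofReal (1 - b))
    (hqc : 0 ≤ q c ∧ P.map S1 (Set.Iic (q c)) = ENNReal.ofReal c)
    (hqd : 0 ≤ q d ∧ P.map S1 (Set.Iic (q d)) = ENNReal.ofReal d)
    (hS0ab : lam⁻¹ * ((∫ x in Set.Icc (0 : ℝ) (q a), x ∂(P.map S1))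
        + ∫ x in Set.Ici (q (1 - b)), x ∂(P.map S1)) = S0)
    (hS0cd : lam⁻¹ * (∫ x in Set.Icc (q c) (q d), x ∂(P.map S1)) = S0) :
    let F : Ω → ℝ := fun ω => f (S1 ω)
    let Vbar : ℝ := sInf {x : ℝ | ∃ h : ℝ,
      0 ≤ cohU P (TVDens P lam) (fun ω => h * (S1 ω - S0) - F ω + x)}
    let Vlow : ℝ := sSup {x : ℝ | ∃ h : ℝ,
      0 ≤ cohU P (TVDens P lam) (fun ω => h * (S1 ω - S0) + F ω - x)}
    Vbar = lam⁻¹ * ((∫ x in Set.Icc (0 : ℝ) (q a), f x ∂(P.map S1))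
        + ∫ x in Set.Ici (q (1 - b)), f x ∂(P.map S1)) ∧
    Vlow = lam⁻¹ * (∫ x in Set.Icc (q c) (q d), f x ∂(P.map S1)) ∧
    {h : ℝ | 0 ≤ cohU P (TVDens P lam) (fun ω => h * (S1 ω - S0) - F ω + Vbar)}
      = {(f (q (1 - b)) - f (q a)) / (q (1 - b) - q a)} ∧
    {h : ℝ | 0 ≤ cohU P (TVDens P lam) (fun ω => h * (S1 ω - S0) + F ω - Vlow)}
      = {-((f (q d) - f (q c)) / (q d - q c))} := by
  have : NullSingletonClass (P.map S1) := ⟨hatomless⟩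
  have hsupp : (P.map S1).support = Ici 0 := support_eq_Ici hsupp1 hsupp2
  have hfint : Integrable f (P.map S1) := by
    obtain ⟨C, hC⟩ := hflin
    refine integrable_of_convexOn_of_linear_growth hfconv ?_
      ((integrable_map_measure aestronglyMeasurable_id hS1meas.aemeasurable).2 hS1int) hC
    rw [interior_Ici, ← compl_Iic]
    exact measure_eq_zero_iff_ae_notMem.1 ((measure_congr Iio_ae_eq_Iic).symm.trans hsupp1)
  have hreal {x y : ℝ} (hy : 0 ≤ y) (h : P.map S1 (Iic x) = ENNReal.ofReal y) :
      (P.map S1).real (Iic x) = y := by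
    rw [measureReal_def, h, ENNReal.toReal_ofReal hy]
  simp only [setIntegral_Icc_eq_setIntegral_Iic hsupp1] at hS0ab ⊢
  exact stmt_19_general hS1meas hS1int hlam.1 hprice (hsupp ▸ hfconv) hfint hab hcd
    (hreal ha hqa.2) (hreal (by linarith) hqb.2) (hreal hc hqc.2)
    (hreal (by linarith [hlam.1]) hqd.2) hS0ab hS0cd
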